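/- arXiv:1205.1833 — 2 statements merged into one kernel-verified Lean document; each statement's English description precedes it below -/
import Mathlib

section
/- Let n ≥ 5 be an integer and let c be a parameter in 𝒦_n. Then for every ε > 0 there exists a Borel probability measure μ on ℝ that is invariant under f_c (i.e., the pushforward of μ by f_c equals μ), whose support is contained in the interval I_c = [c, c² + c], such that the function x ↦ log |2x| is μ-integrable and ∫ log |2x| dμ(x) ≤ χ_crit(c)/2 + ε. In particular the infimum of ∫ log |Df_c| dμ over f_c-invariant Borel probability measures supported on I_c is at most χ_crit(c)/2. -/
open MeasureTheory

/-- The quadratic map `f_c(x) = x² + c`. -/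
def fc (c : ℝ) : ℝ → ℝ := fun x => x ^ 2 + c

/-- The set `𝒦_n` of real parameters. -/
def Kset (n : ℕ) : Set ℝ :=
  {c : ℝ | c < 0 ∧ (∀ j : ℕ, 1 ≤ j → j ≤ n - 1 → 0 < (fc c)^[j] c) ∧
    ∀ k : ℕ, (fc c)^[n + 3 * k + 1] c < 0 ∧ 0 < (fc c)^[n + 3 * k + 2] c}

/-- The lower Lyapunov exponent of the critical value:
`χ_crit(c) = liminf_{m → ∞} (1/m) log |Df_c^m(c)|`. -/
noncomputable def chiCrit (c : ℝ) : ℝ :=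
  Filter.liminf
    (fun m : ℕ => (1 / (m : ℝ)) * Real.log (∏ j ∈ Finset.range m, |2 * (fc c)^[j] c|))
    Filter.atTop

/-!
An invariant measure with small exponent is carried by a periodic orbit that passes close to the
critical point. For `K : ℕ` put `m = n + 3K`. Pulling back a suitable interval along the orbit of
the critical value produces a periodic point `y ≥ 0` of period `m + 5` such that `f(y)` has the same
itinerary as `c` for `m` steps. Along these steps `f^m` expands `f(y) - c = y²` to unit size with
bounded distortion, so `y² |Df^m(c)|` is bounded. Hence `|Df^(m+5)(y)|`, which is `2y |Df^m(f(y))|`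
up to a bounded factor, is at most a constant times `|Df^m(c)|^(1/2)`. The loss of the square root,
caused by the quadratic critical point, is the factor `1/2` in the statement.
-/

open Set Filter Topology

section Preliminaries

lemma abs_le_abs_mul_exp {a b t : ℝ} (h : |a - b| ≤ t * |b|) : |a| ≤ |b| * Real.exp t :=
  calc |a| ≤ |b| * (t + 1) := by linarith [abs_sub_abs_le_abs_sub a b]
    _ ≤ |b| * Real.exp t := by gcongr; exact Real.add_one_le_exp t

lemma exists_abs_eq_one_forall_le_mul {P : ℝ → ℝ} (hP : Monotone P ∨ Antitone P) (u : ℝ) :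
    ∃ σ : ℝ, |σ| = 1 ∧ ∀ t, |u| ≤ t → P u ≤ P (σ * t) := by
  rcases hP with hP | hP
  · exact ⟨1, by simp, fun t ht => hP (by linarith [le_abs_self u])⟩
  · exact ⟨-1, by simp, fun t ht => hP (by linarith [neg_abs_le u])⟩

/-- For `S` not bounded below, `sInf S` takes the junk value `0`. -/
lemma sInf_le_of_forall_pos_exists_le_add {S : Set ℝ} {a : ℝ} (ha : 0 ≤ a)
    (h : ∀ ε > 0, ∃ v ∈ S, v ≤ a + ε) : sInf S ≤ a := by
  by_cases hS : BddBelow S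
  · refine le_of_forall_pos_le_add fun ε hε => ?_
    obtain ⟨v, hv, hle⟩ := h ε hε
    exact (csInf_le hS hv).trans hle
  · rwa [Real.sInf_of_not_bddBelow hS]

variable {a : ℕ → ℝ} {C : ℝ}

lemma isCoboundedUnder_ge_one_div_mul (hC : ∀ m, a m ≤ m * C) :
    IsCoboundedUnder (· ≥ ·) atTop fun m : ℕ => 1 / (m : ℝ) * a m := by
  refine isCoboundedUnder_ge_of_eventually_le (x := C) atTop ?_
  filter_upwards [eventually_gt_atTop 0] with m hm
  rw [one_div, inv_mul_le_iff₀ (Nat.cast_pos.2 hm)]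
  exact hC m

lemma liminf_one_div_mul_nonneg {B : ℝ} (hC : ∀ m, a m ≤ m * C) (hB : ∀ᶠ m in atTop, B ≤ a m) :
    0 ≤ liminf (fun m : ℕ => 1 / (m : ℝ) * a m) atTop := by
  have lim : Tendsto (fun m : ℕ => 1 / (m : ℝ) * B) atTop (𝓝 0) := by
    simpa using tendsto_one_div_atTop_nhds_zero_nat.mul_const B
  rw [← lim.liminf_eq]
  refine liminf_le_liminf ?_ lim.isBoundedUnder_ge (isCoboundedUnder_ge_one_div_mul hC)
  filter_upwards [hB] with m hm
  gcongr

lemma frequently_le_mul_liminf_add {ε : ℝ} (hC : ∀ m, a m ≤ m * C) (hε : 0 < ε) :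
    ∃ᶠ m : ℕ in atTop, a m ≤ m * (liminf (fun m : ℕ => 1 / (m : ℝ) * a m) atTop + ε) := by
  have freq := frequently_lt_of_liminf_lt (isCoboundedUnder_ge_one_div_mul hC)
    (lt_add_of_pos_right _ hε)
  refine (freq.and_eventually (eventually_gt_atTop 0)).mono fun m ⟨hm, hpos⟩ => ?_
  rw [one_div, inv_mul_lt_iff₀ (Nat.cast_pos.2 hpos)] at hm
  exact hm.le

end Preliminaries

section OrbitMeasure

variable {α : Type*} [MeasurableSpace α] {T : α → α} {N : ℕ} {y : α}

/-- The uniform average of the Dirac masses at `y, T y, …, T^(N-1) y`. It is an invariant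
probability measure when `N > 0` and `T^N y = y`. -/
noncomputable def orbitMeasure (T : α → α) (N : ℕ) (y : α) : Measure α :=
  (N : ENNReal)⁻¹ • ∑ j ∈ Finset.range N, Measure.dirac (T^[j] y)

lemma isProbabilityMeasure_orbitMeasure (hN : N ≠ 0) :
    IsProbabilityMeasure (orbitMeasure T N y) := by
  constructor
  simp [orbitMeasure, ENNReal.inv_mul_cancel, hN]

lemma map_orbitMeasure (hT : Measurable T) (hy : Function.IsPeriodicPt T N y) :
    (orbitMeasure T N y).map T = orbitMeasure T N y := by
  have shift (j : ℕ) : (Measure.dirac (T^[j] y)).map T = Measure.dirac (T^[j + 1] y) := by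
    rw [Measure.map_dirac' hT, Function.iterate_succ_apply']
  rw [orbitMeasure, Measure.map_smul, Measure.map_finset_sum hT.aemeasurable]
  simp only [shift]
  rcases N with _ | M
  · rfl
  · rw [Finset.sum_range_succ, Finset.sum_range_succ', hy.eq]
    rfl

lemma orbitMeasure_compl_eq_zero {s : Set α} (hs : MeasurableSet s) (h : ∀ j, T^[j] y ∈ s) :
    orbitMeasure T N y sᶜ = 0 := by
  simp [orbitMeasure, Measure.finsetSum_apply, Measure.dirac_apply' _ hs.compl, h]

lemma integrable_orbitMeasure [MeasurableSingletonClass α] (hN : N ≠ 0) (g : α → ℝ) :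
    Integrable g (orbitMeasure T N y) := by
  refine Integrable.smul_measure (integrable_finsetSum_measure.2 fun j _ => ?_) (by simpa using hN)
  exact integrable_dirac (by simp)

lemma integral_orbitMeasure [MeasurableSingletonClass α] (g : α → ℝ) :
    ∫ x, g x ∂orbitMeasure T N y = (∑ j ∈ Finset.range N, g (T^[j] y)) / N := by
  rw [orbitMeasure, integral_smul_measure,
    integral_finsetSum_measure fun j _ => integrable_dirac (by simp)]
  simp [div_eq_inv_mul]

end OrbitMeasure

section Iterates

variable {c x x' : ℝ} {m : ℕ}

lemma measurable_fc (c : ℝ) : Measurable (fc c) := by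
  unfold fc
  fun_prop

lemma fc_neg (c x : ℝ) : fc c (-x) = fc c x := by simp only [fc, neg_sq]

lemma abs_le_neg_of_mem_Icc (hc : c ∈ Icc (-2) 0) (hx : x ∈ Icc c (c ^ 2 + c)) : |x| ≤ -c :=
  abs_le.2 ⟨by linarith [hx.1], by nlinarith [hx.2, hc.1, hc.2]⟩

lemma mapsTo_fc_Icc (hc : c ∈ Icc (-2) 0) :
    MapsTo (fc c) (Icc c (c ^ 2 + c)) (Icc c (c ^ 2 + c)) := fun x hx =>
  ⟨by simpa only [fc, le_add_iff_nonneg_left] using sq_nonneg x, by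
    simpa only [fc, neg_sq, sq_abs, add_le_add_iff_right] using
      pow_le_pow_left₀ (abs_nonneg x) (abs_le_neg_of_mem_Icc hc hx) 2⟩

/-- The absolute value `|Df_c^m(x)|` of the derivative of the iterate, expanded by the chain
rule. -/
noncomputable def absDerivIter (c : ℝ) (m : ℕ) (x : ℝ) : ℝ :=
  ∏ j ∈ Finset.range m, |2 * (fc c)^[j] x|

lemma absDerivIter_add (c : ℝ) (m k : ℕ) (x : ℝ) :
    absDerivIter c (m + k) x = absDerivIter c m x * absDerivIter c k ((fc c)^[m] x) := by
  simp only [absDerivIter, Finset.prod_range_add, ← Function.iterate_add_apply, Nat.add_comm _ m]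

lemma absDerivIter_succ (c : ℝ) (m : ℕ) (x : ℝ) :
    absDerivIter c (m + 1) x = |2 * x| * absDerivIter c m (fc c x) := by
  simp [absDerivIter, Finset.prod_range_succ', mul_comm]

lemma absDerivIter_three (c x : ℝ) :
    absDerivIter c 3 x = 8 * (|x| * |fc c x| * |fc c (fc c x)|) := by
  simp only [absDerivIter, Finset.prod_range_succ, Finset.prod_range_zero, Function.iterate_succ,
    Function.iterate_zero, Function.comp_apply, id, abs_mul, Nat.abs_ofNat]
  ring

lemma absDerivIter_nonneg (c : ℝ) (m : ℕ) (x : ℝ) : 0 ≤ absDerivIter c m x :=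
  Finset.prod_nonneg fun _ _ => abs_nonneg _

lemma absDerivIter_pos (h : ∀ j < m, (fc c)^[j] x ≠ 0) : 0 < absDerivIter c m x :=
  Finset.prod_pos fun j hj => abs_pos.2 (mul_ne_zero two_ne_zero (h j (Finset.mem_range.1 hj)))

lemma absDerivIter_le_four_pow (hc : c ∈ Icc (-2) 0) (hx : x ∈ Icc c (c ^ 2 + c)) (m : ℕ) :
    absDerivIter c m x ≤ 4 ^ m := by
  have factor_le (j : ℕ) : |2 * (fc c)^[j] x| ≤ 4 := by
    rw [abs_mul, Nat.abs_ofNat]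
    linarith [abs_le_neg_of_mem_Icc hc ((mapsTo_fc_Icc hc).iterate j hx), hc.1]
  calc absDerivIter c m x ≤ ∏ _j ∈ Finset.range m, (4 : ℝ) :=
        Finset.prod_le_prod (fun _ _ => abs_nonneg _) fun j _ => factor_le j
    _ = 4 ^ m := by simp

lemma abs_fc_sub_fc (h : 0 ≤ x * x') : |fc c x - fc c x'| = |x - x'| * (|x| + |x'|) := by
  rw [← (abs_add_eq_add_abs_iff x x').2 (mul_nonneg_iff.1 h), ← abs_mul]
  simp only [fc]
  ring_nf

/-- `x` and `x'` lie strictly on the same side of the critical point `0` during their first `m`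
iterates. -/
def SameItinerary (c : ℝ) (m : ℕ) (x x' : ℝ) : Prop :=
  ∀ j < m, 0 < (fc c)^[j] x * (fc c)^[j] x'

lemma SameItinerary.tail (h : SameItinerary c (m + 1) x x') :
    SameItinerary c m (fc c x) (fc c x') := fun j hj => h (j + 1) (by omega)

lemma SameItinerary.drop {k : ℕ} (h : SameItinerary c (m + k) x x') :
    SameItinerary c k ((fc c)^[m] x) ((fc c)^[m] x') := fun j hj => by
  simpa only [Function.iterate_add_apply] using h (j + m) (by omega)

lemma SameItinerary.mono {k : ℕ} (h : SameItinerary c m x x') (hk : k ≤ m) :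
    SameItinerary c k x x' := fun j hj => h j (by omega)

/-- By AM-GM, `4 |x| |x'| ≤ (|x| + |x'|)²`, and the right side is the squared ratio of
`f(x) - f(x')` to `x - x'`. -/
lemma SameItinerary.sq_sub_mul_absDerivIter_le (h : SameItinerary c m x x') :
    (x - x') ^ 2 * (absDerivIter c m x * absDerivIter c m x') ≤
      ((fc c)^[m] x - (fc c)^[m] x') ^ 2 := by
  induction m generalizing x x' with
  | zero => simp [absDerivIter]
  | succ m ih =>
    have same_sign : 0 < x * x' := h 0 m.succ_pos
    have step : (x - x') ^ 2 * (|2 * x| * |2 * x'|) ≤ (fc c x - fc c x') ^ 2 := by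
      rw [← sq_abs (fc c x - _), abs_fc_sub_fc same_sign.le, mul_pow, sq_abs]
      gcongr
      simp only [abs_mul, Nat.abs_ofNat]
      linarith [four_mul_le_sq_add |x| |x'|]
    have nonneg := mul_nonneg (absDerivIter_nonneg c m (fc c x)) (absDerivIter_nonneg c m (fc c x'))
    calc (x - x') ^ 2 * (absDerivIter c (m + 1) x * absDerivIter c (m + 1) x')
        = (x - x') ^ 2 * (|2 * x| * |2 * x'|) *
            (absDerivIter c m (fc c x) * absDerivIter c m (fc c x')) := by
          rw [absDerivIter_succ, absDerivIter_succ]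
          ring
      _ ≤ (fc c x - fc c x') ^ 2 * (absDerivIter c m (fc c x) * absDerivIter c m (fc c x')) := by
          gcongr
      _ ≤ ((fc c)^[m + 1] x - (fc c)^[m + 1] x') ^ 2 := ih h.tail

end Iterates

section LyapunovExponents

/-- The Lyapunov exponents `∫ log |Df_c| dμ` of the `f_c`-invariant Borel probability measures `μ`
on `I_c` for which `log |Df_c|` is integrable. -/
def lyapunovExponents (c : ℝ) : Set ℝ :=
  {v : ℝ | ∃ μ : Measure ℝ, IsProbabilityMeasure μ ∧
      Measure.map (fc c) μ = μ ∧ μ (Icc c (c ^ 2 + c))ᶜ = 0 ∧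
      Integrable (fun x => Real.log |2 * x|) μ ∧
      v = ∫ x, Real.log |2 * x| ∂μ}

lemma log_absDerivIter_div_mem_lyapunovExponents {c y : ℝ} {N : ℕ} (hc : c ∈ Icc (-2) 0)
    (hy : y ∈ Icc c (c ^ 2 + c)) (hper : Function.IsPeriodicPt (fc c) N y) (hN : N ≠ 0)
    (hne : ∀ j < N, (fc c)^[j] y ≠ 0) :
    Real.log (absDerivIter c N y) / N ∈ lyapunovExponents c := by
  refine ⟨orbitMeasure (fc c) N y, isProbabilityMeasure_orbitMeasure hN,
    map_orbitMeasure (measurable_fc c) hper,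
    orbitMeasure_compl_eq_zero measurableSet_Icc fun j => (mapsTo_fc_Icc hc).iterate j hy,
    integrable_orbitMeasure hN _, ?_⟩
  rw [integral_orbitMeasure, absDerivIter, Real.log_prod]
  intro j hj
  simpa using hne j (Finset.mem_range.1 hj)

end LyapunovExponents

section InverseBranches

variable {c w x : ℝ} {m : ℕ}

/-- The nonnegative inverse branch of `f_c`. For `w < c` it takes the junk value `0`. -/
noncomputable def posBranch (c w : ℝ) : ℝ := √(w - c)

lemma posBranch_nonneg (c w : ℝ) : 0 ≤ posBranch c w := Real.sqrt_nonneg _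

lemma fc_posBranch (h : c ≤ w) : fc c (posBranch c w) = w := by
  rw [fc, posBranch, Real.sq_sqrt (sub_nonneg.2 h), sub_add_cancel]

lemma posBranch_fc (c x : ℝ) : posBranch c (fc c x) = |x| := by
  rw [posBranch, fc, add_sub_cancel_right, Real.sqrt_sq_eq_abs]

lemma monotone_posBranch (c : ℝ) : Monotone (posBranch c) := fun _ _ h =>
  Real.sqrt_le_sqrt (sub_le_sub_right h c)

@[fun_prop]
lemma continuous_posBranch (c : ℝ) : Continuous (posBranch c) := by
  unfold posBranch
  fun_prop

lemma posBranch_mem_Icc {a b : ℝ} (hb : 0 ≤ b) (ha : a ^ 2 ≤ w - c) (hw : w - c ≤ b ^ 2) :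
    posBranch c w ∈ Icc a b :=
  ⟨Real.le_sqrt_of_sq_le ha, Real.sqrt_le_iff.2 ⟨hb, hw⟩⟩

lemma fc_sign_mul_posBranch (hx : x ≠ 0) (h : c ≤ w) :
    fc c (SignType.sign x * posBranch c w) = w := by
  rcases hx.lt_or_gt with hx | hx
  · simpa [hx, fc_neg] using fc_posBranch h
  · simpa [hx] using fc_posBranch h

/-- The point obtained from `w` by pulling back `m` steps, at each step taking the inverse branch
that contains the corresponding point of the orbit of `x`. -/
noncomputable def orbitPullback (c x : ℝ) : ℕ → ℝ → ℝ
  | 0, w => w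
  | m + 1, w => orbitPullback c x m (SignType.sign ((fc c)^[m] x) * posBranch c w)

lemma orbitPullback_iterate (c x : ℝ) (m : ℕ) : orbitPullback c x m ((fc c)^[m] x) = x := by
  induction m with
  | zero => rfl
  | succ m ih =>
    rw [orbitPullback, Function.iterate_succ_apply', posBranch_fc, sign_mul_abs, ih]

lemma continuous_orbitPullback (c x : ℝ) (m : ℕ) : Continuous (orbitPullback c x m) := by
  induction m with
  | zero => exact continuous_id
  | succ m ih => exact ih.comp (continuous_const.mul (continuous_posBranch c))

lemma monotone_or_antitone_orbitPullback (c x : ℝ) (m : ℕ) :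
    Monotone (orbitPullback c x m) ∨ Antitone (orbitPullback c x m) := by
  induction m with
  | zero => exact .inl monotone_id
  | succ m ih =>
    rcases le_total 0 (SignType.sign ((fc c)^[m] x) : ℝ) with h | h
    · have step := (monotone_posBranch c).const_mul h
      exact ih.imp (·.comp step) (·.comp_monotone step)
    · have step := (monotone_posBranch c).const_mul_of_nonpos h
      exact ih.symm.imp (·.comp step) (·.comp_antitone step)

/-- The pull-back of `w` along the orbit of `x` is genuine: no square root of a negative number
occurs in it, so that it is an `m`-th preimage of `w` with the itinerary of `x`. -/
structure IsValidPullback (c x : ℝ) (m : ℕ) (w : ℝ) : Prop where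
  iterate_eq : (fc c)^[m] (orbitPullback c x m w) = w
  sameItinerary : SameItinerary c m (orbitPullback c x m w) x

lemma isValidPullback_zero (c x w : ℝ) : IsValidPullback c x 0 w :=
  ⟨rfl, fun _ hj => absurd hj (Nat.not_lt_zero _)⟩

lemma IsValidPullback.succ (hx : (fc c)^[m] x ≠ 0) (hw : c < w)
    (h : IsValidPullback c x m (SignType.sign ((fc c)^[m] x) * posBranch c w)) :
    IsValidPullback c x (m + 1) w where
  iterate_eq := by
    rw [orbitPullback, Function.iterate_succ_apply', h.iterate_eq, fc_sign_mul_posBranch hx hw.le]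
  sameItinerary := Nat.forall_lt_succ_right.2 ⟨h.sameItinerary, by
    rw [orbitPullback, h.iterate_eq, mul_right_comm, sign_mul_self]
    exact mul_pos (abs_pos.2 hx) (Real.sqrt_pos.2 (sub_pos.2 hw))⟩

end InverseBranches

section ReturnBlocks

variable {c w x x' y : ℝ} {K : ℕ}

/-- The nonnegative third preimage of `w` whose orbit to `w` has itinerary `+-+`. -/
noncomputable def returnBranch (c w : ℝ) : ℝ := posBranch c (-posBranch c (posBranch c w))

lemma posBranch_mem_of_abs_le (hc : c ∈ Ioo (-2) (-1.98)) (hw : |w| ≤ 4 / 5) :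
    posBranch c w ∈ Icc 1.08 1.68 := by
  obtain ⟨hc₁, hc₂⟩ := hc
  obtain ⟨hw₁, hw₂⟩ := abs_le.1 hw
  exact posBranch_mem_Icc (by norm_num) (by linarith) (by linarith)

lemma posBranch_posBranch_mem_of_abs_le (hc : c ∈ Ioo (-2) (-1.98)) (hw : |w| ≤ 4 / 5) :
    posBranch c (posBranch c w) ∈ Icc 1.74 1.92 := by
  obtain ⟨h₁, h₂⟩ := posBranch_mem_of_abs_le hc hw
  obtain ⟨hc₁, hc₂⟩ := hc
  exact posBranch_mem_Icc (by norm_num) (by linarith) (by linarith)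

lemma returnBranch_mem_of_abs_le (hc : c ∈ Ioo (-2) (-1.98)) (hw : |w| ≤ 4 / 5) :
    returnBranch c w ∈ Icc 0.2 0.52 := by
  obtain ⟨h₁, h₂⟩ := posBranch_posBranch_mem_of_abs_le hc hw
  obtain ⟨hc₁, hc₂⟩ := hc
  exact posBranch_mem_Icc (by norm_num) (by linarith) (by linarith)

/-- The nonnegative fourth preimage of `y` whose orbit to `y` has itinerary `+-+-`; it closes up the
periodic orbit. -/
noncomputable def closingBranch (c y : ℝ) : ℝ := returnBranch c (-posBranch c y)

lemma continuous_closingBranch (c : ℝ) : Continuous (closingBranch c) := by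
  unfold closingBranch returnBranch
  fun_prop

lemma closingBranch_mem_Icc_and_iterate (hc : c ∈ Ioo (-2) (-1.98)) (hy : y ∈ Icc 0 (3 / 5)) :
    closingBranch c y ∈ Icc 0.55 0.65 ∧ (fc c)^[4] (closingBranch c y) = y := by
  obtain ⟨hc₁, hc₂⟩ := hc
  obtain ⟨hy₁, hy₂⟩ := hy
  obtain ⟨h₁, h₁'⟩ : posBranch c y ∈ Icc 1.4 1.62 :=
    posBranch_mem_Icc (by norm_num) (by linarith) (by linarith)
  obtain ⟨h₂, h₂'⟩ : posBranch c (-posBranch c y) ∈ Icc 0.6 0.78 :=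
    posBranch_mem_Icc (by norm_num) (by linarith) (by linarith)
  obtain ⟨h₃, h₃'⟩ : posBranch c (posBranch c (-posBranch c y)) ∈ Icc 1.6 1.67 :=
    posBranch_mem_Icc (by norm_num) (by linarith) (by linarith)
  refine ⟨posBranch_mem_Icc (by norm_num) (by linarith) (by linarith), ?_⟩
  simp only [Function.iterate_succ_apply, Function.iterate_zero_apply, closingBranch, returnBranch]
  rw [fc_posBranch (by linarith), fc_neg, fc_posBranch (by linarith), fc_posBranch (by linarith),
    fc_neg, fc_posBranch (by linarith)]

lemma abs_mul_closingBranch_le {σ : ℝ} (hc : c ∈ Ioo (-2) (-1.98)) (hy : y ∈ Icc 0 (3 / 5))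
    (hσ : |σ| = 1) : |σ * closingBranch c y| ≤ 4 / 5 := by
  obtain ⟨⟨h₁, h₂⟩, -⟩ := closingBranch_mem_Icc_and_iterate hc hy
  rw [abs_mul, hσ, one_mul, abs_of_nonneg (by linarith)]
  linarith

lemma iterate_four_mul_closingBranch {σ : ℝ} (hc : c ∈ Ioo (-2) (-1.98)) (hy : y ∈ Icc 0 (3 / 5))
    (hσ : |σ| = 1) : (fc c)^[4] (σ * closingBranch c y) = y := by
  have fc_mul : fc c (σ * closingBranch c y) = fc c (closingBranch c y) := by
    simp only [fc, mul_pow, ← sq_abs σ, hσ, one_pow, one_mul]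
  rw [Function.iterate_succ_apply, fc_mul, ← Function.iterate_succ_apply,
    (closingBranch_mem_Icc_and_iterate hc hy).2]

lemma abs_le_of_fc_neg_of_fc_fc_pos (hc : c ∈ Ioo (-2) (-1.98)) (h₁ : fc c x < 0)
    (h₂ : 0 < fc c (fc c x)) : |x| ≤ 4 / 5 := by
  obtain ⟨hc₁, hc₂⟩ := hc
  have fc_lt : fc c x < -1.4 := by
    by_contra! h
    simp only [fc] at *
    nlinarith
  refine abs_le_of_sq_le_sq ?_ (by norm_num)
  simp only [fc] at fc_lt
  linarith

/-- The third iterate of `x` comes back near the critical point with itinerary `?-+`. -/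
structure IsReturnBlock (c x : ℝ) : Prop where
  fc_neg : fc c x < 0
  fc_fc_pos : 0 < fc c (fc c x)
  abs_le : |fc c (fc c (fc c x))| ≤ 4 / 5

namespace IsReturnBlock

lemma fc_fc_mem (hc : c ∈ Ioo (-2) (-1.98)) (h : IsReturnBlock c x) :
    fc c (fc c x) ∈ Icc 1.08 1.68 := by
  simpa only [posBranch_fc, abs_of_pos h.fc_fc_pos] using posBranch_mem_of_abs_le hc h.abs_le

lemma neg_fc_mem (hc : c ∈ Ioo (-2) (-1.98)) (h : IsReturnBlock c x) :
    -fc c x ∈ Icc 1.74 1.92 := by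
  simpa only [posBranch_fc, abs_of_pos h.fc_fc_pos, abs_of_neg h.fc_neg] using
    posBranch_posBranch_mem_of_abs_le hc h.abs_le

lemma abs_mem (hc : c ∈ Ioo (-2) (-1.98)) (h : IsReturnBlock c x) : |x| ∈ Icc 0.2 0.52 := by
  simpa only [returnBranch, posBranch_fc, abs_of_pos h.fc_fc_pos, abs_of_neg h.fc_neg,
    neg_neg] using returnBranch_mem_of_abs_le hc h.abs_le

lemma one_le_absDerivIter_three (hc : c ∈ Ioo (-2) (-1.98)) (h : IsReturnBlock c x) :
    1 ≤ absDerivIter c 3 x := by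
  have h₀ := (h.abs_mem hc).1
  have h₁ := (h.neg_fc_mem hc).1
  have h₂ := (h.fc_fc_mem hc).1
  rw [absDerivIter_three, abs_of_neg h.fc_neg, abs_of_pos h.fc_fc_pos]
  calc (1 : ℝ) ≤ 8 * (0.2 * 1.74 * 1.08) := by norm_num
    _ ≤ 8 * (|x| * -fc c x * fc c (fc c x)) := by gcongr

lemma abs_sub_le (hc : c ∈ Ioo (-2) (-1.98)) (h : IsReturnBlock c x) (h' : IsReturnBlock c x')
    (hs : 0 ≤ x * x') :
    |fc c (fc c x) - fc c (fc c x')| ≤ |fc c (fc c (fc c x)) - fc c (fc c (fc c x'))| / 2 ∧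
    |fc c x - fc c x'| ≤ |fc c (fc c (fc c x)) - fc c (fc c (fc c x'))| / 4 ∧
    |x - x'| ≤ |fc c (fc c (fc c x)) - fc c (fc c (fc c x'))| / 2 := by
  have h₀ := (h.abs_mem hc).1
  have h₀' := (h'.abs_mem hc).1
  have h₁ := (h.neg_fc_mem hc).1
  have h₁' := (h'.neg_fc_mem hc).1
  have h₂ := (h.fc_fc_mem hc).1
  have h₂' := (h'.fc_fc_mem hc).1
  have expand₀ : |x - x'| * 0.4 ≤ |fc c x - fc c x'| := by
    rw [abs_fc_sub_fc hs]
    gcongr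
    linarith
  have expand₁ : |fc c x - fc c x'| * 3.4 ≤ |fc c (fc c x) - fc c (fc c x')| := by
    rw [abs_fc_sub_fc (mul_pos_of_neg_of_neg h.fc_neg h'.fc_neg).le, abs_of_neg h.fc_neg,
      abs_of_neg h'.fc_neg]
    gcongr
    linarith
  have expand₂ : |fc c (fc c x) - fc c (fc c x')| * 2 ≤
      |fc c (fc c (fc c x)) - fc c (fc c (fc c x'))| := by
    rw [abs_fc_sub_fc (mul_pos h.fc_fc_pos h'.fc_fc_pos).le, abs_of_pos h.fc_fc_pos,
      abs_of_pos h'.fc_fc_pos]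
    gcongr
    linarith
  have nonneg := abs_nonneg (x - x')
  exact ⟨by linarith, by linarith, by linarith⟩

lemma absDerivIter_three_le (hc : c ∈ Ioo (-2) (-1.98)) (h : IsReturnBlock c x)
    (h' : IsReturnBlock c x') (hs : 0 ≤ x * x') :
    absDerivIter c 3 x ≤ absDerivIter c 3 x' *
      Real.exp (6 * |fc c (fc c (fc c x)) - fc c (fc c (fc c x'))|) := by
  obtain ⟨diff₂, diff₁, diff₀⟩ := h.abs_sub_le hc h' hs
  set d := |fc c (fc c (fc c x)) - fc c (fc c (fc c x'))|
  have d_nonneg : 0 ≤ d := abs_nonneg _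
  have ratio₀ : |x| ≤ |x'| * Real.exp (4 * d) :=
    abs_le_abs_mul_exp (by nlinarith [(h'.abs_mem hc).1])
  have ratio₁ : |fc c x| ≤ |fc c x'| * Real.exp d :=
    abs_le_abs_mul_exp (by nlinarith [(h'.neg_fc_mem hc).1, neg_le_abs (fc c x')])
  have ratio₂ : |fc c (fc c x)| ≤ |fc c (fc c x')| * Real.exp d :=
    abs_le_abs_mul_exp (by nlinarith [(h'.fc_fc_mem hc).1, le_abs_self (fc c (fc c x'))])
  have exp_split : Real.exp (6 * d) = Real.exp (4 * d) * Real.exp d * Real.exp d := by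
    rw [← Real.exp_add, ← Real.exp_add]
    ring_nf
  rw [absDerivIter_three, absDerivIter_three, exp_split]
  calc 8 * (|x| * |fc c x| * |fc c (fc c x)|)
      ≤ 8 * (|x'| * Real.exp (4 * d) * (|fc c x'| * Real.exp d) *
          (|fc c (fc c x')| * Real.exp d)) := by gcongr
    _ = _ := by ring

end IsReturnBlock

lemma one_le_absDerivIter_of_isReturnBlock (hc : c ∈ Ioo (-2) (-1.98))
    (h : ∀ k < K, IsReturnBlock c ((fc c)^[3 * k] x)) : 1 ≤ absDerivIter c (3 * K) x := by
  induction K with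
  | zero => simp [absDerivIter]
  | succ K ih =>
    rw [mul_add_one, absDerivIter_add]
    exact one_le_mul_of_one_le_of_one_le (ih fun k hk => h k (by omega))
      ((h K K.lt_succ_self).one_le_absDerivIter_three hc)

/-- The contraction by `1/2` over the last block keeps the constant: `12 / 2 + 6 = 12`. -/
lemma SameItinerary.absDerivIter_le_mul_exp (hc : c ∈ Ioo (-2) (-1.98))
    (hs : SameItinerary c (3 * K) x x')
    (h : ∀ k < K, IsReturnBlock c ((fc c)^[3 * k] x))
    (h' : ∀ k < K, IsReturnBlock c ((fc c)^[3 * k] x')) :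
    absDerivIter c (3 * K) x ≤ absDerivIter c (3 * K) x' *
      Real.exp (12 * |(fc c)^[3 * K] x - (fc c)^[3 * K] x'|) := by
  induction K with
  | zero => simp [absDerivIter]
  | succ K ih =>
    have blocks := ih (hs.mono (by omega)) (fun k hk => h k (by omega)) fun k hk => h' k (by omega)
    have same_sign := (hs (3 * K) (by omega)).le
    have last := (h K K.lt_succ_self).absDerivIter_three_le hc (h' K K.lt_succ_self) same_sign
    have contract := ((h K K.lt_succ_self).abs_sub_le hc (h' K K.lt_succ_self) same_sign).2.2
    rw [mul_add_one, absDerivIter_add, absDerivIter_add]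
    simp only [Function.iterate_succ_apply']
    set d := |fc c (fc c (fc c ((fc c)^[3 * K] x))) - fc c (fc c (fc c ((fc c)^[3 * K] x')))|
    calc absDerivIter c (3 * K) x * absDerivIter c 3 ((fc c)^[3 * K] x)
        ≤ absDerivIter c (3 * K) x' * Real.exp (6 * d) *
            (absDerivIter c 3 ((fc c)^[3 * K] x') * Real.exp (6 * d)) := by
          refine mul_le_mul (blocks.trans ?_) last (absDerivIter_nonneg _ _ _)
            (mul_nonneg (absDerivIter_nonneg _ _ _) (Real.exp_pos _).le)
          exact mul_le_mul_of_nonneg_left (Real.exp_le_exp.2 (by linarith))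
            (absDerivIter_nonneg _ _ _)
      _ = absDerivIter c (3 * K) x' * absDerivIter c 3 ((fc c)^[3 * K] x') *
            Real.exp (12 * d) := by
          rw [show 12 * d = 6 * d + 6 * d by ring, Real.exp_add]
          ring

end ReturnBlocks

section CriticalOrbit

variable {n m : ℕ} {c : ℝ}

lemma neg_two_lt_of_mem_Kset (hc : c ∈ Kset n) : -2 < c := by
  by_contra! hle
  have neg_le_iterate (j : ℕ) : -c ≤ (fc c)^[j + 1] c := by
    induction j with
    | zero =>
      simp only [zero_add, Function.iterate_one, fc]
      nlinarith
    | succ j ih =>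
      rw [Function.iterate_succ_apply']
      simp only [fc] at ih ⊢
      nlinarith
  linarith [neg_le_iterate n, (hc.2.2 0).1]

lemma lt_of_mem_Kset (hn : 5 ≤ n) (hc : c ∈ Kset n) : c < -1.98 := by
  obtain ⟨c_neg, pos, -⟩ := hc
  by_contra! hle
  have pos₁ : 0 < fc c c := pos 1 (by omega) (by omega)
  have pos₂ : 0 < fc c (fc c c) := pos 2 (by omega) (by omega)
  have pos₃ : 0 < fc c (fc c (fc c c)) := pos 3 (by omega) (by omega)
  have pos₄ : 0 < fc c (fc c (fc c (fc c c))) := pos 4 (by omega) (by omega)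
  have fc_le {t x : ℝ} (hx : 0 < x) (hxt : x ≤ t * -c) : fc c x ≤ (1.98 * t ^ 2 - 1) * -c := by
    have sq_le : x ^ 2 ≤ (t * -c) ^ 2 := by gcongr
    have : t ^ 2 * (c ^ 2 + 1.98 * c) ≤ 0 :=
      mul_nonpos_of_nonneg_of_nonpos (sq_nonneg t) (by nlinarith)
    simp only [fc]
    linarith
  have le₁ : fc c c ≤ 0.98 * -c := by
    simp only [fc]
    nlinarith
  have le₂ := fc_le pos₁ le₁
  have le₃ := fc_le pos₂ le₂
  have le₄ := fc_le pos₃ le₃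
  nlinarith

lemma mem_Ioo_of_mem_Kset (hn : 5 ≤ n) (hc : c ∈ Kset n) : c ∈ Ioo (-2) (-1.98) :=
  ⟨neg_two_lt_of_mem_Kset hc, lt_of_mem_Kset hn hc⟩

lemma mem_Icc_of_mem_Kset (hc : c ∈ Kset n) : c ∈ Icc (-2) 0 :=
  ⟨(neg_two_lt_of_mem_Kset hc).le, hc.1.le⟩

lemma abs_iterate_le_of_mem_Kset (hn : 5 ≤ n) (hc : c ∈ Kset n) (k : ℕ) :
    |(fc c)^[n + 3 * k] c| ≤ 4 / 5 := by
  obtain ⟨neg, pos⟩ := hc.2.2 k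
  simp only [Function.iterate_succ_apply'] at neg pos
  exact abs_le_of_fc_neg_of_fc_fc_pos (mem_Ioo_of_mem_Kset hn hc) neg pos

lemma isReturnBlock_of_mem_Kset (hn : 5 ≤ n) (hc : c ∈ Kset n) (k : ℕ) :
    IsReturnBlock c ((fc c)^[n + 3 * k] c) where
  fc_neg := by simpa only [Function.iterate_succ_apply'] using (hc.2.2 k).1
  fc_fc_pos := by simpa only [Function.iterate_succ_apply'] using (hc.2.2 k).2
  abs_le := by
    simpa only [mul_add_one, ← add_assoc, Function.iterate_succ_apply'] using
      abs_iterate_le_of_mem_Kset hn hc (k + 1)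

lemma iterate_ne_zero_of_mem_Kset (hn : 5 ≤ n) (hc : c ∈ Kset n) (j : ℕ) : (fc c)^[j] c ≠ 0 := by
  rcases Nat.lt_or_ge j n with hj | hj
  · rcases Nat.eq_zero_or_pos j with rfl | hj₀
    · exact hc.1.ne
    · exact (hc.2.1 j hj₀ (by omega)).ne'
  · obtain ⟨k, rfl | rfl | rfl⟩ : ∃ k, j = n + 3 * k ∨ j = n + 3 * k + 1 ∨ j = n + 3 * k + 2 :=
      ⟨(j - n) / 3, by omega⟩
    · have abs_ge := ((isReturnBlock_of_mem_Kset hn hc k).abs_mem (mem_Ioo_of_mem_Kset hn hc)).1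
      exact abs_pos.1 (by linarith)
    · exact (hc.2.2 k).1.ne
    · exact (hc.2.2 k).2.ne'

lemma absDerivIter_pos_of_mem_Kset (hn : 5 ≤ n) (hc : c ∈ Kset n) (m : ℕ) :
    0 < absDerivIter c m c :=
  absDerivIter_pos fun j _ => iterate_ne_zero_of_mem_Kset hn hc j

lemma log_absDerivIter_le (hn : 5 ≤ n) (hc : c ∈ Kset n) (m k : ℕ) :
    Real.log (absDerivIter c (m + k) c) ≤ Real.log (absDerivIter c m c) + k * Real.log 4 := by
  have hc' := mem_Icc_of_mem_Kset hc
  have c_mem : c ∈ Icc c (c ^ 2 + c) := left_mem_Icc.2 (by nlinarith [sq_nonneg c])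
  have pos := absDerivIter_pos_of_mem_Kset hn hc m
  rw [← Real.log_pow, ← Real.log_mul pos.ne' (by positivity)]
  refine Real.log_le_log (absDerivIter_pos_of_mem_Kset hn hc _) ?_
  rw [absDerivIter_add]
  gcongr
  exact absDerivIter_le_four_pow hc' ((mapsTo_fc_Icc hc').iterate m c_mem) k

lemma log_absDerivIter_le_mul_log_four (hn : 5 ≤ n) (hc : c ∈ Kset n) (m : ℕ) :
    Real.log (absDerivIter c m c) ≤ m * Real.log 4 := by
  simpa [absDerivIter] using log_absDerivIter_le hn hc 0 m

lemma exists_log_absDerivIter_add_three_mul_le (hn : 5 ≤ n) (hc : c ∈ Kset n) (hm : n ≤ m) :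
    ∃ K, m ≤ n + 3 * K ∧
      Real.log (absDerivIter c (n + 3 * K) c) ≤ Real.log (absDerivIter c m c) + 2 * Real.log 4 := by
  obtain ⟨K, i, hi, hK⟩ : ∃ K i, i ≤ 2 ∧ n + 3 * K = m + i :=
    ⟨(m - n + 2) / 3, n + 3 * ((m - n + 2) / 3) - m, by omega, by omega⟩
  refine ⟨K, by omega, hK ▸ (log_absDerivIter_le hn hc m i).trans ?_⟩
  gcongr
  exact_mod_cast hi

lemma log_absDerivIter_sub_le (hn : 5 ≤ n) (hc : c ∈ Kset n) (hm : n ≤ m) :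
    Real.log (absDerivIter c n c) - 2 * Real.log 4 ≤ Real.log (absDerivIter c m c) := by
  obtain ⟨K, -, hK⟩ := exists_log_absDerivIter_add_three_mul_le hn hc hm
  have blocks_ge : 1 ≤ absDerivIter c (3 * K) ((fc c)^[n] c) :=
    one_le_absDerivIter_of_isReturnBlock (mem_Ioo_of_mem_Kset hn hc) fun k _ => by
      simpa only [← Function.iterate_add_apply, Nat.add_comm _ n] using
        isReturnBlock_of_mem_Kset hn hc k
  have mono : Real.log (absDerivIter c n c) ≤ Real.log (absDerivIter c (n + 3 * K) c) := by
    rw [absDerivIter_add]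
    have pos := absDerivIter_pos_of_mem_Kset hn hc n
    exact Real.log_le_log pos (le_mul_of_one_le_right pos.le blocks_ge)
  linarith

lemma chiCrit_nonneg (hn : 5 ≤ n) (hc : c ∈ Kset n) : 0 ≤ chiCrit c :=
  liminf_one_div_mul_nonneg (log_absDerivIter_le_mul_log_four hn hc)
    ((eventually_ge_atTop n).mono fun _ => log_absDerivIter_sub_le hn hc)

lemma frequently_log_absDerivIter_le {ε : ℝ} (hn : 5 ≤ n) (hc : c ∈ Kset n) (hε : 0 < ε) :
    ∃ᶠ m : ℕ in atTop, Real.log (absDerivIter c m c) ≤ m * (chiCrit c + ε) :=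
  frequently_le_mul_liminf_add (log_absDerivIter_le_mul_log_four hn hc) hε

end CriticalOrbit

section PeriodicPoints

variable {n K : ℕ} {c x y w : ℝ}

lemma isValidPullback_prefix (hn : 5 ≤ n) (hc : c ∈ Kset n) (hw : -(4 / 5) ≤ w) {j : ℕ}
    (hj : j < n) : IsValidPullback c c (j + 1) w := by
  have c_lt := lt_of_mem_Kset hn hc
  induction j generalizing w with
  | zero => exact (isValidPullback_zero c c _).succ hc.1.ne (by linarith)
  | succ j ih =>
    have pos : 0 < (fc c)^[j + 1] c := hc.2.1 (j + 1) (by omega) (by omega)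
    refine IsValidPullback.succ pos.ne' (by linarith) ?_
    rw [sign_pos pos, SignType.coe_one, one_mul]
    exact ih (by linarith [posBranch_nonneg c w]) (by omega)

lemma isValidPullback_of_abs_le (hn : 5 ≤ n) (hc : c ∈ Kset n) (hw : |w| ≤ 4 / 5) :
    IsValidPullback c c (n + 3 * K) w := by
  have hc' := mem_Ioo_of_mem_Kset hn hc
  induction K generalizing w with
  | zero =>
    obtain ⟨p, rfl⟩ : ∃ p, n = p + 1 := ⟨n - 1, by omega⟩
    exact isValidPullback_prefix hn hc (abs_le.1 hw).1 p.lt_succ_self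
  | succ K ih =>
    obtain ⟨neg, pos⟩ := hc.2.2 K
    have ne := iterate_ne_zero_of_mem_Kset hn hc (n + 3 * K)
    obtain ⟨h₁, -⟩ := posBranch_mem_of_abs_le hc' hw
    obtain ⟨-, h₂⟩ := posBranch_posBranch_mem_of_abs_le hc' hw
    obtain ⟨h₃, h₃'⟩ := returnBranch_mem_of_abs_le hc' hw
    rw [mul_add_one, ← add_assoc]
    refine .succ pos.ne' (by linarith [hc'.2, (abs_le.1 hw).1]) ?_
    rw [sign_pos pos, SignType.coe_one, one_mul]
    refine .succ neg.ne (by linarith [hc'.2]) ?_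
    rw [sign_neg neg, SignType.coe_neg_one, neg_one_mul]
    refine .succ ne (by linarith [hc'.2]) (ih ?_)
    change |_ * returnBranch c w| ≤ 4 / 5
    rcases ne.lt_or_gt with h | h <;> simp [h, abs_le] <;> constructor <;> linarith

lemma lt_of_sameItinerary (hn : 5 ≤ n) (hc : c ∈ Kset n) (h : SameItinerary c 3 x c) :
    x < -1.64 := by
  have x_neg : x < 0 := (neg_iff_neg_of_mul_pos (h 0 (by omega))).2 hc.1
  have pos₁ : 0 < fc c x :=
    (pos_iff_pos_of_mul_pos (h 1 (by omega))).2 (hc.2.1 1 (by omega) (by omega))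
  have pos₂ : 0 < fc c (fc c x) :=
    (pos_iff_pos_of_mul_pos (h 2 (by omega))).2 (hc.2.1 2 (by omega) (by omega))
  have c_lt := lt_of_mem_Kset hn hc
  have one_lt : 1 < fc c x := by
    by_contra! hle
    simp only [fc] at *
    nlinarith
  simp only [fc] at one_lt
  nlinarith

/-- The point `y` is a fixed point of `y ↦ √(P(σ b(y)) - c)`, where `b` is the closing branch, `P`
is the pull-back along `m = n + 3K` steps of the critical orbit, and the sign `σ` puts `P(σ b(y))`
on the side of `P(f^m(c)) = c` on which `f⁻¹` is real. -/
lemma exists_fc_eq_orbitPullback_closingBranch (hn : 5 ≤ n) (hc : c ∈ Kset n) (K : ℕ) :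
    ∃ σ : ℝ, |σ| = 1 ∧ ∃ y ∈ Icc 0 (3 / 5),
      fc c y = orbitPullback c c (n + 3 * K) (σ * closingBranch c y) := by
  have hc' := mem_Ioo_of_mem_Kset hn hc
  obtain ⟨σ, hσ, le_pullback⟩ := exists_abs_eq_one_forall_le_mul
    (monotone_or_antitone_orbitPullback c c (n + 3 * K)) ((fc c)^[n + 3 * K] c)
  rw [orbitPullback_iterate] at le_pullback
  refine ⟨σ, hσ, ?_⟩
  set z : ℝ → ℝ := fun y => orbitPullback c c (n + 3 * K) (σ * closingBranch c y)
  have abs_critical_le := ((isReturnBlock_of_mem_Kset hn hc K).abs_mem hc').2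
  have le_z {y : ℝ} (hy : y ∈ Icc 0 (3 / 5)) : c ≤ z y :=
    le_pullback _ (by linarith [(closingBranch_mem_Icc_and_iterate hc' hy).1.1])
  have z_lt {y : ℝ} (hy : y ∈ Icc 0 (3 / 5)) : z y < -1.64 :=
    have valid := isValidPullback_of_abs_le (K := K) hn hc (abs_mul_closingBranch_le hc' hy hσ)
    lt_of_sameItinerary hn hc (valid.sameItinerary.mono (by omega))
  have maps : MapsTo (fun y => posBranch c (z y)) (Icc 0 (3 / 5)) (Icc 0 (3 / 5)) := fun y hy =>
    posBranch_mem_Icc (by norm_num) (by linarith [le_z hy]) (by linarith [z_lt hy, hc'.1])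
  have cont : Continuous fun y => posBranch c (z y) :=
    (continuous_posBranch c).comp ((continuous_orbitPullback c c _).comp
      (continuous_const.mul (continuous_closingBranch c)))
  obtain ⟨y, hy, fixed⟩ :=
    exists_mem_Icc_isFixedPt_of_mapsTo cont.continuousOn (by norm_num) maps
  refine ⟨y, hy, ?_⟩
  conv_lhs => rw [← fixed.eq]
  exact fc_posBranch (le_z hy)

lemma exists_isPeriodicPt_sameItinerary (hn : 5 ≤ n) (hc : c ∈ Kset n) (K : ℕ) :
    ∃ y ∈ Icc 0 (3 / 5), Function.IsPeriodicPt (fc c) (n + 3 * K + 5) y ∧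
      SameItinerary c (n + 3 * K) (fc c y) c ∧ |(fc c)^[n + 3 * K] (fc c y)| ≤ 4 / 5 := by
  have hc' := mem_Ioo_of_mem_Kset hn hc
  obtain ⟨σ, hσ, y, hy, fc_y⟩ := exists_fc_eq_orbitPullback_closingBranch hn hc K
  have abs_le := abs_mul_closingBranch_le hc' hy hσ
  have valid := isValidPullback_of_abs_le (K := K) hn hc abs_le
  have landing : (fc c)^[n + 3 * K] (fc c y) = σ * closingBranch c y := by
    rw [fc_y, valid.iterate_eq]
  refine ⟨y, hy, ?_, fc_y ▸ valid.sameItinerary, landing ▸ abs_le⟩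
  rw [Function.IsPeriodicPt, Function.IsFixedPt, show n + 3 * K + 5 = 4 + (n + 3 * K + 1) by ring,
    Function.iterate_add_apply, Function.iterate_succ_apply _ (n + 3 * K), landing,
    iterate_four_mul_closingBranch hc' hy hσ]

lemma iterate_ne_zero_of_isPeriodicPt {N j : ℕ} (hper : Function.IsPeriodicPt (fc c) (N + 1) y)
    (hne : (fc c)^[N] c ≠ 0) : (fc c)^[j] y ≠ 0 := by
  intro h
  have zero_periodic : Function.IsPeriodicPt (fc c) (N + 1) 0 := h ▸ hper.apply_iterate j
  have fc_zero : fc c 0 = c := by simp [fc]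
  rw [Function.IsPeriodicPt, Function.IsFixedPt, Function.iterate_succ_apply, fc_zero]
    at zero_periodic
  exact hne zero_periodic

lemma SameItinerary.isReturnBlock (hn : 5 ≤ n) (hc : c ∈ Kset n)
    (h : SameItinerary c (n + 3 * K) x c) (hx : |(fc c)^[n + 3 * K] x| ≤ 4 / 5) {k : ℕ}
    (hk : k < K) : IsReturnBlock c ((fc c)^[n + 3 * k] x) := by
  have neg (i : ℕ) (hi : i < K) : fc c ((fc c)^[n + 3 * i] x) < 0 := by
    simpa only [Function.iterate_succ_apply'] using
      (neg_iff_neg_of_mul_pos (h (n + 3 * i + 1) (by omega))).2 (hc.2.2 i).1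
  have pos (i : ℕ) (hi : i < K) : 0 < fc c (fc c ((fc c)^[n + 3 * i] x)) := by
    simpa only [Function.iterate_succ_apply'] using
      (pos_iff_pos_of_mul_pos (h (n + 3 * i + 2) (by omega))).2 (hc.2.2 i).2
  refine ⟨neg k hk, pos k hk, ?_⟩
  suffices |(fc c)^[n + 3 * (k + 1)] x| ≤ 4 / 5 by
    simpa only [mul_add_one, ← add_assoc, Function.iterate_succ_apply'] using this
  rcases (Nat.succ_le_of_lt hk).eq_or_lt with rfl | hlt
  · exact hx
  · exact abs_le_of_fc_neg_of_fc_fc_pos (mem_Ioo_of_mem_Kset hn hc) (neg _ hlt) (pos _ hlt)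

lemma SameItinerary.absDerivIter_blocks_le (hn : 5 ≤ n) (hc : c ∈ Kset n)
    (h : SameItinerary c (n + 3 * K) x c) (hx : |(fc c)^[n + 3 * K] x| ≤ 4 / 5) :
    absDerivIter c (3 * K) ((fc c)^[n] x) ≤
      absDerivIter c (3 * K) ((fc c)^[n] c) * Real.exp 20 := by
  have distortion := h.drop.absDerivIter_le_mul_exp (mem_Ioo_of_mem_Kset hn hc)
    (fun k hk => by
      simpa only [← Function.iterate_add_apply, Nat.add_comm _ n] using h.isReturnBlock hn hc hx hk)
    (fun k _ => by
      simpa only [← Function.iterate_add_apply, Nat.add_comm _ n] using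
        isReturnBlock_of_mem_Kset hn hc k)
  simp only [← Function.iterate_add_apply, Nat.add_comm _ n] at distortion
  refine distortion.trans ?_
  have diff_le := (abs_sub _ _).trans (add_le_add hx (abs_iterate_le_of_mem_Kset hn hc K))
  gcongr
  · exact absDerivIter_nonneg _ _ _
  · linarith

end PeriodicPoints

section Conclusion

variable {n K : ℕ} {c x y : ℝ}

lemma absDerivIter_le_of_sameItinerary (hn : 5 ≤ n) (hc : c ∈ Kset n)
    (hx : x ∈ Icc c (c ^ 2 + c)) (h : SameItinerary c (n + 3 * K) x c)
    (hland : |(fc c)^[n + 3 * K] x| ≤ 4 / 5) :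
    absDerivIter c (n + 3 * K) x ≤
      4 ^ n * Real.exp 20 / absDerivIter c n c * absDerivIter c (n + 3 * K) c := by
  have pos := absDerivIter_pos_of_mem_Kset hn hc n
  calc absDerivIter c (n + 3 * K) x
      = absDerivIter c n x * absDerivIter c (3 * K) ((fc c)^[n] x) := absDerivIter_add ..
    _ ≤ 4 ^ n * (absDerivIter c (3 * K) ((fc c)^[n] c) * Real.exp 20) :=
        mul_le_mul (absDerivIter_le_four_pow (mem_Icc_of_mem_Kset hc) hx n)
          (h.absDerivIter_blocks_le hn hc hland) (absDerivIter_nonneg ..) (by positivity)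
    _ = 4 ^ n * Real.exp 20 / absDerivIter c n c * absDerivIter c (n + 3 * K) c := by
        rw [absDerivIter_add]
        field_simp

lemma pow_four_mul_absDerivIter_le (hn : 5 ≤ n) (hc : c ∈ Kset n)
    (h : SameItinerary c (n + 3 * K) (fc c y) c)
    (hland : |(fc c)^[n + 3 * K] (fc c y)| ≤ 4 / 5) :
    y ^ 4 * absDerivIter c (n + 3 * K) (fc c y) * absDerivIter c (n + 3 * K) c ≤ 4 := by
  have fc_sub : fc c y - c = y ^ 2 := by simp only [fc, add_sub_cancel_right]
  have diff_le : |(fc c)^[n + 3 * K] (fc c y) - (fc c)^[n + 3 * K] c| ≤ 2 := by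
    linarith [abs_sub ((fc c)^[n + 3 * K] (fc c y)) ((fc c)^[n + 3 * K] c),
      abs_iterate_le_of_mem_Kset hn hc K]
  calc y ^ 4 * absDerivIter c (n + 3 * K) (fc c y) * absDerivIter c (n + 3 * K) c
      = (fc c y - c) ^ 2 *
          (absDerivIter c (n + 3 * K) (fc c y) * absDerivIter c (n + 3 * K) c) := by
        rw [fc_sub]
        ring
    _ ≤ ((fc c)^[n + 3 * K] (fc c y) - (fc c)^[n + 3 * K] c) ^ 2 := h.sq_sub_mul_absDerivIter_le
    _ ≤ 4 := by
        rw [← sq_abs]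
        nlinarith [abs_nonneg ((fc c)^[n + 3 * K] (fc c y) - (fc c)^[n + 3 * K] c)]

lemma absDerivIter_add_five_le (hc : c ∈ Icc (-2) 0) (hy : y ∈ Icc c (c ^ 2 + c)) (m : ℕ) :
    absDerivIter c (m + 5) y ≤ 512 * |y| * absDerivIter c m (fc c y) := by
  have maps := mapsTo_fc_Icc hc
  calc absDerivIter c (m + 5) y
      = |2 * y| * (absDerivIter c m (fc c y) * absDerivIter c 4 ((fc c)^[m] (fc c y))) := by
        rw [absDerivIter_succ, absDerivIter_add]
    _ ≤ |2 * y| * (absDerivIter c m (fc c y) * 4 ^ 4) := by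
        gcongr
        · exact absDerivIter_nonneg ..
        · exact absDerivIter_le_four_pow hc (maps.iterate m (maps hy)) 4
    _ = 512 * |y| * absDerivIter c m (fc c y) := by
        rw [abs_mul, abs_two]
        ring

/-- From `y⁴ A B ≤ 4` and `A ≤ C B` one gets `(y A)⁴ ≤ 4 A³ / B ≤ 4 C³ B²`. -/
lemma log_mul_le_of_pow_four_mul_le {A B C : ℝ} (hy : 0 < y) (hA : 0 < A) (hB : 0 < B)
    (hC : 0 < C) (hyAB : y ^ 4 * A * B ≤ 4) (hAB : A ≤ C * B) :
    Real.log (y * A) ≤ (Real.log 4 + 3 * Real.log C) / 4 + Real.log B / 2 := by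
  have log_yAB := Real.log_le_log (by positivity) hyAB
  have log_AB := Real.log_le_log hA hAB
  rw [Real.log_mul (by positivity) hB.ne', Real.log_mul (by positivity) hA.ne', Real.log_pow]
    at log_yAB
  rw [Real.log_mul hC.ne' hB.ne'] at log_AB
  rw [Real.log_mul hy.ne' hA.ne']
  push_cast at log_yAB
  linarith

lemma exists_isPeriodicPt_log_absDerivIter_le (hn : 5 ≤ n) (hc : c ∈ Kset n) :
    ∃ C, ∀ K, ∃ y ∈ Icc c (c ^ 2 + c), Function.IsPeriodicPt (fc c) (n + 3 * K + 5) y ∧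
      (∀ j, (fc c)^[j] y ≠ 0) ∧ Real.log (absDerivIter c (n + 3 * K + 5) y) ≤
        C + Real.log (absDerivIter c (n + 3 * K) c) / 2 := by
  obtain ⟨c_gt, c_lt⟩ := mem_Ioo_of_mem_Kset hn hc
  have hc' := mem_Icc_of_mem_Kset hc
  set C := 4 ^ n * Real.exp 20 / absDerivIter c n c
  have C_pos : 0 < C := div_pos (by positivity) (absDerivIter_pos_of_mem_Kset hn hc n)
  refine ⟨Real.log 512 + (Real.log 4 + 3 * Real.log C) / 4, fun K => ?_⟩
  obtain ⟨y, ⟨y_nonneg, y_le⟩, periodic, same, landing⟩ :=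
    exists_isPeriodicPt_sameItinerary hn hc K
  have hy : y ∈ Icc c (c ^ 2 + c) := ⟨by linarith, by nlinarith⟩
  have ne_zero (j : ℕ) : (fc c)^[j] y ≠ 0 :=
    iterate_ne_zero_of_isPeriodicPt periodic (iterate_ne_zero_of_mem_Kset hn hc _)
  refine ⟨y, hy, periodic, ne_zero, ?_⟩
  have y_pos : 0 < y := y_nonneg.lt_of_ne' (ne_zero 0)
  have deriv_pos : 0 < absDerivIter c (n + 3 * K) (fc c y) :=
    absDerivIter_pos fun j _ => ne_zero (j + 1)
  have log_le := log_mul_le_of_pow_four_mul_le y_pos deriv_pos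
    (absDerivIter_pos_of_mem_Kset hn hc _) C_pos (pow_four_mul_absDerivIter_le hn hc same landing)
    (absDerivIter_le_of_sameItinerary hn hc (mapsTo_fc_Icc hc' hy) same landing)
  calc Real.log (absDerivIter c (n + 3 * K + 5) y)
      ≤ Real.log (512 * (y * absDerivIter c (n + 3 * K) (fc c y))) := by
        refine Real.log_le_log (absDerivIter_pos fun j _ => ne_zero j) ?_
        simpa only [abs_of_pos y_pos, mul_assoc] using absDerivIter_add_five_le hc' hy (n + 3 * K)
    _ = Real.log 512 + Real.log (y * absDerivIter c (n + 3 * K) (fc c y)) :=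
        Real.log_mul (by norm_num) (by positivity)
    _ ≤ _ := by linarith

lemma exists_mem_lyapunovExponents_le {ε : ℝ} (hn : 5 ≤ n) (hc : c ∈ Kset n) (hε : 0 < ε) :
    ∃ v ∈ lyapunovExponents c, v ≤ chiCrit c / 2 + ε := by
  obtain ⟨C, hC⟩ := exists_isPeriodicPt_log_absDerivIter_le hn hc
  obtain ⟨m, log_m_le, n_le, const_le⟩ := ((frequently_log_absDerivIter_le hn hc hε).and_eventually
    ((eventually_ge_atTop n).and (tendsto_natCast_atTop_atTop.eventually_ge_atTop
      ((C + Real.log 4) / (ε / 2))))).exists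
  obtain ⟨K, m_le, log_le⟩ := exists_log_absDerivIter_add_three_mul_le hn hc n_le
  obtain ⟨y, hy, periodic, ne_zero, log_y_le⟩ := hC K
  refine ⟨_, log_absDerivIter_div_mem_lyapunovExponents (mem_Icc_of_mem_Kset hc) hy periodic
    (by omega) fun j _ => ne_zero j, ?_⟩
  rw [div_le_iff₀' (by positivity)]
  rw [div_le_iff₀ (half_pos hε)] at const_le
  calc Real.log (absDerivIter c (n + 3 * K + 5) y)
      ≤ m * (chiCrit c / 2 + ε) := by linarith
    _ ≤ (n + 3 * K + 5 : ℕ) * (chiCrit c / 2 + ε) := by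
        have := chiCrit_nonneg hn hc
        gcongr
        omega

end Conclusion

theorem stmt_6 (n : ℕ) (hn : 5 ≤ n) (c : ℝ) (hc : c ∈ Kset n) :
    (∀ ε : ℝ, 0 < ε → ∃ μ : Measure ℝ, IsProbabilityMeasure μ ∧
      Measure.map (fc c) μ = μ ∧ μ (Set.Icc c (c ^ 2 + c))ᶜ = 0 ∧
      Integrable (fun x => Real.log |2 * x|) μ ∧
      ∫ x, Real.log |2 * x| ∂μ ≤ chiCrit c / 2 + ε) ∧
    sInf {v : ℝ | ∃ μ : Measure ℝ, IsProbabilityMeasure μ ∧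
      Measure.map (fc c) μ = μ ∧ μ (Set.Icc c (c ^ 2 + c))ᶜ = 0 ∧
      Integrable (fun x => Real.log |2 * x|) μ ∧
      v = ∫ x, Real.log |2 * x| ∂μ} ≤ chiCrit c / 2 := by
  constructor
  · intro ε hε
    obtain ⟨_, ⟨μ, prob, inv, supp, integrable, rfl⟩, le⟩ :=
      exists_mem_lyapunovExponents_le hn hc hε
    exact ⟨μ, prob, inv, supp, integrable, le⟩
  · exact sInf_le_of_forall_pos_exists_le_add (div_nonneg (chiCrit_nonneg hn hc) zero_le_two)
      fun ε hε => exists_mem_lyapunovExponents_le hn hc hε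
end

section
/- Let p̃ : ℝ → ℝ be differentiable at c = −2, satisfy f_c³(p̃(c)) = p̃(c) for all c in some neighborhood of −2, and satisfy p̃(−2) = 2 cos(4π/9). Then the function c ↦ 8 p̃(c) (p̃(c)² + c) ((p̃(c)² + c)² + c), which gives the derivative of f_c³ at the periodic point p̃(c), is differentiable at −2 and its derivative at −2 equals 24. -/
open Real Filter

/-!
Differentiating `q = p² + c`, `r = q² + c`, `p = r² + c` in `c` gives a linear system for the
derivatives of the points of a 3-cycle, solvable as long as the multiplier `8pqr` is not `1`. The
resulting derivative of the multiplier is a symmetric function of the cycle. At `c = -2` the cycle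
of `2 cos (4π/9)` consists of the roots of `X³ - 3X + 1`, so its elementary symmetric functions are
`0, -3, -1` and the derivative is `8 · 27 / 9 = 24`.
-/

/-- The derivative of `(fc c)^[3]` at `x`, written out by the chain rule as a product along the
orbit of `x`; it is the multiplier of the cycle when `x` has period three. -/
def threeCycleMultiplier (c x : ℝ) : ℝ := 8 * x * fc c x * fc c (fc c x)

theorem one_sub_mul_deriv_prod_of_three_cycle {R : Type*} [CommRing R] {c p q r p' q' r' : R}
    (hq : p ^ 2 + c = q) (hr : q ^ 2 + c = r) (hp : r ^ 2 + c = p)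
    (hq' : 2 * p * p' + 1 = q') (hr' : 2 * q * q' + 1 = r') (hp' : 2 * r * r' + 1 = p') :
    (1 - 8 * p * q * r) * (p' * q * r + p * q' * r + p * q * r') =
      3 * (p * q + q * r + r * p) - 2 * c * (p + q + r) +
        4 * ((p * q) ^ 2 + (q * r) ^ 2 + (r * p) ^ 2) := by
  have solve_p' : (1 - 8 * p * q * r) * p' = 1 + 2 * r + 4 * q * r := by
    linear_combination -hp' - 2 * r * hr' - 4 * q * r * hq'
  have solve_q' : (1 - 8 * p * q * r) * q' = 1 + 2 * p + 4 * r * p := by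
    linear_combination -hq' - 2 * p * hp' - 4 * r * p * hr'
  have solve_r' : (1 - 8 * p * q * r) * r' = 1 + 2 * q + 4 * p * q := by
    linear_combination -hr' - 2 * q * hq' - 4 * p * q * hp'
  linear_combination q * r * solve_p' + r * p * solve_q' + p * q * solve_r' +
    2 * r * hq + 2 * p * hr + 2 * q * hp

theorem hasDerivAt_fc_comp {x : ℝ → ℝ} {x' c : ℝ} (hx : HasDerivAt x x' c) :
    HasDerivAt (fun t => fc t (x t)) (2 * x c * x' + 1) c := by
  simpa [fc] using (hx.fun_pow 2).fun_add (hasDerivAt_id' c)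

theorem hasDerivAt_threeCycleMultiplier {x : ℝ → ℝ} {c p q r : ℝ} (hx : DifferentiableAt ℝ x c)
    (hcycle : ∀ᶠ t in nhds c, (fc t)^[3] (x t) = x t)
    (hp : x c = p) (hq : fc c p = q) (hr : fc c q = r) (hmult : 8 * p * q * r ≠ 1) :
    HasDerivAt (fun t => threeCycleMultiplier t (x t))
      (8 * (3 * (p * q + q * r + r * p) - 2 * c * (p + q + r) +
        4 * ((p * q) ^ 2 + (q * r) ^ 2 + (r * p) ^ 2)) / (1 - 8 * p * q * r)) c := by
  subst hp hq hr
  have hp' := hx.hasDerivAt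
  have hq' := hasDerivAt_fc_comp hp'
  have hr' := hasDerivAt_fc_comp hq'
  have hclosed := (hasDerivAt_fc_comp hr').unique (hp'.congr_of_eventuallyEq hcycle)
  have hprod := one_sub_mul_deriv_prod_of_three_cycle rfl rfl hcycle.self_of_nhds rfl rfl hclosed
  refine (((hp'.const_mul 8).fun_mul hq').fun_mul hr').congr_deriv ?_
  rw [eq_div_iff (sub_ne_zero.2 hmult.symm)]
  simp only [fc] at hprod ⊢
  linear_combination 8 * hprod

theorem two_mul_cos_four_pi_div_nine_cubed :
    (2 * cos (4 * π / 9)) ^ 3 = 3 * (2 * cos (4 * π / 9)) - 1 := by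
  have hcos : cos (3 * (4 * π / 9)) = -(1 / 2) := by
    rw [show 3 * (4 * π / 9) = π / 3 + π by ring, cos_add_pi, cos_pi_div_three]
  linear_combination 2 * hcos - 2 * cos_three_mul (4 * π / 9)

theorem esymm_orbit_of_cubed_eq {p q r : ℝ} (hp : p ^ 3 = 3 * p - 1)
    (hq : fc (-2) p = q) (hr : fc (-2) q = r) :
    p + q + r = 0 ∧ p * q + q * r + r * p = -3 ∧ p * q * r = -1 := by
  simp only [fc] at hq hr
  have sum_eq : p + q + r = 0 := by
    subst hq hr
    linear_combination p * hp
  obtain rfl : r = -p - q := by linear_combination sum_eq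
  subst hq
  refine ⟨sum_eq, ?_, ?_⟩
  · linear_combination (-p - 1) * hp
  · linear_combination (-p ^ 2 - p + 1) * hp

theorem stmt_11 (ptilde : ℝ → ℝ)
    (hptilde : DifferentiableAt ℝ ptilde (-2))
    (hptildefix : ∀ᶠ c in nhds (-2 : ℝ), (fc c)^[3] (ptilde c) = ptilde c)
    (hptildeval : ptilde (-2) = 2 * Real.cos (4 * π / 9)) :
    DifferentiableAt ℝ
      (fun c => 8 * ptilde c * ((ptilde c) ^ 2 + c) * (((ptilde c) ^ 2 + c) ^ 2 + c)) (-2) ∧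
    deriv (fun c => 8 * ptilde c * ((ptilde c) ^ 2 + c) * (((ptilde c) ^ 2 + c) ^ 2 + c)) (-2)
      = 24 := by
  obtain ⟨p, hp⟩ : ∃ p, ptilde (-2) = p := ⟨_, rfl⟩
  obtain ⟨q, hq⟩ : ∃ q, fc (-2) p = q := ⟨_, rfl⟩
  obtain ⟨r, hr⟩ : ∃ r, fc (-2) q = r := ⟨_, rfl⟩
  have hcubic : p ^ 3 = 3 * p - 1 := by
    rw [← hp, hptildeval, two_mul_cos_four_pi_div_nine_cubed]
  obtain ⟨sum_eq, sum_pairs_eq, prod_eq⟩ := esymm_orbit_of_cubed_eq hcubic hq hr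
  have hmult : 8 * p * q * r = -8 := by linear_combination 8 * prod_eq
  have sum_sq_pairs_eq : (p * q) ^ 2 + (q * r) ^ 2 + (r * p) ^ 2 = 9 := by
    linear_combination (p * q + q * r + r * p - 3) * sum_pairs_eq - 2 * (p * q * r) * sum_eq
  have hderiv := hasDerivAt_threeCycleMultiplier hptilde hptildefix hp hq hr (by norm_num [hmult])
  rw [sum_eq, sum_pairs_eq, sum_sq_pairs_eq, hmult] at hderiv
  exact ⟨hderiv.differentiableAt, hderiv.deriv.trans (by norm_num)⟩
end
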